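/- Let λ > 0 and q ∈ (0,1), and set φ(λ) = (1-λ)/(1+λ). Then λ^q equals the limit of the continued fraction [1; (2qφ(λ))/(-1 - qφ(λ)), ((q²-1²)φ(λ)²)/(-3), ((q²-2²)φ(λ)²)/(-5), ..., ((q²-(k-1)²)φ(λ)²)/(-(2k-1)), ...], i.e., the sequence of its convergents converges to λ^q. -/

import Mathlib

open Filter

/-!
Put `φ = tanh u`, so that `λ = exp (-2u)`. Multiplied by `(-cosh u) ^ n * exp (± q u)`, the
numerators and denominators of the convergents become `Gₙ(q, u)` and `Gₙ(-q, u)`, and both families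
satisfy the *same* ladder `∂Gₙ₊₁/∂u = ((n + 1)² - q²) sinh u Gₙ`, with the same positive value
`1 · 3 ⋯ (2n - 1)` at `u = 0`. Hence every combination `α Gₙ(q, ·) + β Gₙ(-q, ·)` satisfies the
ladder too, with an initial value of the sign of `α + β`. Integrating the ladder from an index
beyond `|q|` on, where its coefficients are positive, shows that for `u > 0` and `α + β > 0` such a
combination is eventually positive: the unknown sign of the first function contributes a term of
order `wᵐ / m!` with `w = cosh u - 1`, which loses against the contribution `wᵐ⁻¹ / (m - 1)!` of the
next initial value. Therefore `Gₙ(q, u) / Gₙ(-q, u) → 1`, and `exp (-2qu) = λ ^ q`.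
-/

open Set Topology
open scoped Nat

section IteratedPrimitives

variable {g : ℕ → ℝ → ℝ} {c : ℕ → ℝ} {w w' : ℝ → ℝ} {a b : ℝ}

lemma hasDerivAt_pow_div_factorial {t d : ℝ} (hw : HasDerivAt w d t) (m : ℕ) :
    HasDerivAt (fun t => w t ^ (m + 1) / (m + 1)!) (d * (w t ^ m / m !)) t := by
  refine ((hw.pow (m + 1)).div_const _).congr_deriv ?_
  rw [Nat.factorial_succ]
  push_cast
  field_simp

lemma le_of_hasDerivAt_le {f h f' h' : ℝ → ℝ}
    (hf : ∀ t ∈ Icc a b, HasDerivAt f (f' t) t) (hh : ∀ t ∈ Icc a b, HasDerivAt h (h' t) t)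
    (ha : f a ≤ h a) (hle : ∀ t ∈ Icc a b, f' t ≤ h' t) {t : ℝ} (ht : t ∈ Icc a b) :
    f t ≤ h t :=
  image_le_of_deriv_right_le_deriv_boundary
    (fun x hx => (hf x hx).continuousAt.continuousWithinAt)
    (fun x hx => (hf x (Ico_subset_Icc_self hx)).hasDerivWithinAt) ha
    (fun x hx => (hh x hx).continuousAt.continuousWithinAt)
    (fun x hx => (hh x (Ico_subset_Icc_self hx)).hasDerivWithinAt)
    (fun x hx => hle x (Ico_subset_Icc_self hx)) ht

lemma taylor_le_of_ladder {L : ℝ} (hc : ∀ n, 0 < c n)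
    (hg : ∀ n, ∀ t ∈ Icc a b, HasDerivAt (g (n + 1)) (c n * w' t * g n t) t)
    (hw : ∀ t ∈ Icc a b, HasDerivAt w (w' t) t) (hwa : w a = 0) (hw' : ∀ t ∈ Icc a b, 0 ≤ w' t)
    (hga : ∀ n, 0 ≤ g (n + 1) a) (hL : ∀ t ∈ Icc a b, L ≤ g 0 t) (m : ℕ) :
    ∀ t ∈ Icc a b, (∏ i ∈ Finset.range (m + 1), c i) *
      (g 1 a / c 0 * (w t ^ m / m !) + L * (w t ^ (m + 1) / (m + 1)!)) ≤ g (m + 1) t := by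
  induction m with
  | zero =>
    have hf : ∀ t ∈ Icc a b,
        HasDerivAt (fun t => g 1 a + c 0 * L * w t) (c 0 * L * w' t) t :=
      fun t ht => ((hw t ht).const_mul (c 0 * L)).const_add (g 1 a)
    have hle : ∀ t ∈ Icc a b, c 0 * L * w' t ≤ c 0 * w' t * g 0 t := fun t ht => by
      linarith [mul_le_mul_of_nonneg_left (hL t ht) (mul_nonneg (hc 0).le (hw' t ht))]
    intro t ht
    convert le_of_hasDerivAt_le hf (hg 0) (by simp [hwa]) hle ht using 1
    have := (hc 0).ne'
    simp only [zero_add, Finset.prod_range_one, pow_zero, pow_one, Nat.factorial_zero,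
      Nat.factorial_one, Nat.cast_one, div_one, mul_one]
    field_simp
  | succ m ih =>
    have hf : ∀ t ∈ Icc a b, HasDerivAt _ _ t := fun t ht =>
      (((hasDerivAt_pow_div_factorial (hw t ht) m).const_mul (g 1 a / c 0)).add
        ((hasDerivAt_pow_div_factorial (hw t ht) (m + 1)).const_mul L)).const_mul
          (∏ i ∈ Finset.range (m + 2), c i)
    refine fun t ht => le_of_hasDerivAt_le hf (hg (m + 1)) (by simpa [hwa] using hga (m + 1))
      (fun t ht => ?_) ht
    have h := mul_le_mul_of_nonneg_left (ih t ht) (mul_nonneg (hc (m + 1)).le (hw' t ht))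
    rw [Finset.prod_range_succ]
    linarith

lemma eventually_pos_of_ladder (hc : ∀ n, 0 < c n)
    (hg : ∀ n, ∀ t ∈ Icc a b, HasDerivAt (g (n + 1)) (c n * w' t * g n t) t)
    (hw : ∀ t ∈ Icc a b, HasDerivAt w (w' t) t) (hwa : w a = 0) (hw' : ∀ t ∈ Icc a b, 0 ≤ w' t)
    (hga : ∀ n, 0 < g (n + 1) a) (hg0 : ContinuousOn (g 0) (Icc a b))
    (hab : a ≤ b) (hwb : 0 < w b) :
    ∀ᶠ n in atTop, 0 < g n b := by
  obtain ⟨L, hL⟩ := isCompact_Icc.bddBelow_image hg0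
  have hA : 0 < g 1 a / c 0 := div_pos (hga 0) (hc 0)
  have hlarge : ∀ᶠ m : ℕ in atTop, -(L * w b) / (g 1 a / c 0) < m :=
    tendsto_natCast_atTop_atTop.eventually_gt_atTop _
  rw [← map_add_atTop_eq_nat 1, eventually_map]
  filter_upwards [hlarge] with m hm
  refine lt_of_lt_of_le (mul_pos (Finset.prod_pos fun i _ => hc i) ?_)
    (taylor_le_of_ladder hc hg hw hwa hw' (fun n => (hga n).le)
      (fun t ht => hL (mem_image_of_mem _ ht)) m b (right_mem_Icc.2 hab))
  have hfactor : g 1 a / c 0 * (w b ^ m / m !) + L * (w b ^ (m + 1) / (m + 1)!) =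
      w b ^ m / (m + 1)! * (g 1 a / c 0 * (m + 1) + L * w b) := by
    rw [Nat.factorial_succ]
    push_cast
    field_simp
    ring
  rw [hfactor]
  rw [div_lt_iff₀ hA] at hm
  exact mul_pos (by positivity) (by linarith)

end IteratedPrimitives

lemma tendsto_div_nhds_one_of_eventually_pos_combination {ι : Type*} {l : Filter ι} {x y : ι → ℝ}
    (h : ∀ α β : ℝ, 0 < α + β → ∀ᶠ i in l, 0 < α * x i + β * y i) :
    Tendsto (fun i => x i / y i) l (𝓝 1) := by
  have hy : ∀ᶠ i in l, 0 < y i := by simpa using h 0 1 (by norm_num)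
  refine tendsto_order.2 ⟨fun r hr => ?_, fun r hr => ?_⟩
  · filter_upwards [hy, h 1 (-r) (by linarith)] with i hyi hi
    rw [lt_div_iff₀ hyi]
    linarith
  · filter_upwards [hy, h (-1) r (by linarith)] with i hyi hi
    rw [div_lt_iff₀ hyi]
    linarith

/-- The numerators (`s = q`) and denominators (`s = -q`) of the convergents at `φ = tanh u`,
multiplied by `(-cosh u) ^ n * exp (s * u)`: see `scaledConvergent_eq`. The scaling clears the
denominators of `tanh` and makes the derivative in `u` depend on `s` only through `s ^ 2`. -/
noncomputable def scaledConvergent (s u : ℝ) : ℕ → ℝ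
  | 0 => Real.exp (s * u)
  | 1 => Real.exp (s * u) * (Real.cosh u - s * Real.sinh u)
  | n + 2 => (2 * n + 3) * Real.cosh u * scaledConvergent s u (n + 1) -
      ((n + 1) ^ 2 - s ^ 2) * Real.sinh u ^ 2 * scaledConvergent s u n

section ScaledConvergent

variable (s u : ℝ) (n : ℕ)

lemma scaledConvergent_zero : scaledConvergent s u 0 = Real.exp (s * u) := rfl

lemma scaledConvergent_one :
    scaledConvergent s u 1 = Real.exp (s * u) * (Real.cosh u - s * Real.sinh u) := rfl

lemma scaledConvergent_add_two : scaledConvergent s u (n + 2) =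
    (2 * n + 3) * Real.cosh u * scaledConvergent s u (n + 1) -
      ((n + 1) ^ 2 - s ^ 2) * Real.sinh u ^ 2 * scaledConvergent s u n := rfl

lemma scaledConvergent_neg_right : scaledConvergent s (-u) n = scaledConvergent (-s) u n := by
  induction n using Nat.twoStepInduction with
  | zero => simp [scaledConvergent_zero]
  | one => simp [scaledConvergent_one]
  | more n ih₀ ih₁ => simp [scaledConvergent_add_two, ih₀, ih₁]

lemma scaledConvergent_apply_zero :
    scaledConvergent s 0 n = ∏ k ∈ Finset.range n, (2 * (k : ℝ) + 1) := by
  induction n using Nat.twoStepInduction with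
  | zero => simp [scaledConvergent_zero]
  | one => simp [scaledConvergent_one]
  | more n _ ih =>
    rw [scaledConvergent_add_two, ih, Finset.prod_range_succ _ (n + 1)]
    simp only [Real.cosh_zero, Real.sinh_zero, ne_eq, OfNat.ofNat_ne_zero, not_false_eq_true,
      zero_pow, mul_one, mul_zero, zero_mul, sub_zero, Nat.cast_add, Nat.cast_one]
    ring

lemma hasDerivAt_scaledConvergent_zero :
    HasDerivAt (fun u => scaledConvergent s u 0) (s * scaledConvergent s u 0) u :=
  (((hasDerivAt_id u).const_mul s).exp).congr_deriv (by simp [scaledConvergent_zero, mul_comm])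

variable {s u n} in
lemma hasDerivAt_scaledConvergent_add_two {d₀ d₁ : ℝ}
    (h₀ : HasDerivAt (fun u => scaledConvergent s u n) d₀ u)
    (h₁ : HasDerivAt (fun u => scaledConvergent s u (n + 1)) d₁ u) :
    HasDerivAt (fun u => scaledConvergent s u (n + 2))
      ((2 * n + 3) * (Real.sinh u * scaledConvergent s u (n + 1) + Real.cosh u * d₁) -
        ((n + 1) ^ 2 - s ^ 2) *
          (2 * Real.sinh u * Real.cosh u * scaledConvergent s u n + Real.sinh u ^ 2 * d₀)) u := by
  refine ((((Real.hasDerivAt_cosh u).const_mul (2 * (n : ℝ) + 3)).mul h₁).sub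
    ((((Real.hasDerivAt_sinh u).pow 2).const_mul (((n : ℝ) + 1) ^ 2 - s ^ 2)).mul
      h₀)).congr_deriv ?_
  rw [Pi.pow_apply]
  push_cast
  ring

lemma hasDerivAt_scaledConvergent_succ :
    HasDerivAt (fun u => scaledConvergent s u (n + 1))
      (((n + 1) ^ 2 - s ^ 2) * Real.sinh u * scaledConvergent s u n) u := by
  have h₀ := hasDerivAt_scaledConvergent_zero s u
  have h₁ : HasDerivAt (fun u => scaledConvergent s u 1)
      ((1 - s ^ 2) * Real.sinh u * scaledConvergent s u 0) u := by
    refine (h₀.mul ((Real.hasDerivAt_cosh u).sub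
      ((Real.hasDerivAt_sinh u).const_mul s))).congr_deriv ?_
    rw [Pi.sub_apply]
    ring
  induction n using Nat.twoStepInduction with
  | zero => simpa using h₁
  | one =>
    refine (hasDerivAt_scaledConvergent_add_two h₀ h₁).congr_deriv ?_
    rw [zero_add, scaledConvergent_one, scaledConvergent_zero]
    push_cast
    ring
  | more n ih₀ ih₁ =>
    refine (hasDerivAt_scaledConvergent_add_two ih₀ ih₁).congr_deriv ?_
    rw [scaledConvergent_add_two s u n]
    push_cast
    ring

lemma continuous_scaledConvergent : Continuous fun u => scaledConvergent s u n := by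
  cases n with
  | zero =>
    exact continuous_iff_continuousAt.2 fun u => (hasDerivAt_scaledConvergent_zero s u).continuousAt
  | succ n =>
    exact continuous_iff_continuousAt.2 fun u =>
      (hasDerivAt_scaledConvergent_succ s u n).continuousAt

variable {s u} {α β : ℝ}

lemma combination_scaledConvergent_apply_zero_pos (h : 0 < α + β) :
    0 < α * scaledConvergent s 0 n + β * scaledConvergent (-s) 0 n := by
  rw [scaledConvergent_apply_zero, scaledConvergent_apply_zero, ← add_mul]
  exact mul_pos h (Finset.prod_pos fun k _ => by positivity)

lemma eventually_pos_combination_scaledConvergent_of_pos (hu : 0 < u) (h : 0 < α + β) :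
    ∀ᶠ n in atTop, 0 < α * scaledConvergent s u n + β * scaledConvergent (-s) u n := by
  obtain ⟨N, hN⟩ := exists_nat_ge |s|
  have hpos (n : ℕ) : 0 < (((N + n : ℕ) : ℝ) + 1) ^ 2 - s ^ 2 := by
    rw [sub_pos, sq_lt_sq, abs_of_nonneg (by positivity : (0 : ℝ) ≤ ((N + n : ℕ) : ℝ) + 1)]
    push_cast
    linarith [n.cast_nonneg (α := ℝ)]
  have hcosh (t : ℝ) : HasDerivAt (fun t => Real.cosh t - 1) (Real.sinh t) t :=
    (Real.hasDerivAt_cosh t).sub_const 1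
  have hderiv (n : ℕ) (t : ℝ) : HasDerivAt
      (fun t => α * scaledConvergent s t (N + n + 1) + β * scaledConvergent (-s) t (N + n + 1))
      ((((N + n : ℕ) + 1) ^ 2 - s ^ 2) * Real.sinh t *
        (α * scaledConvergent s t (N + n) + β * scaledConvergent (-s) t (N + n))) t := by
    refine (((hasDerivAt_scaledConvergent_succ s t (N + n)).const_mul α).add
      ((hasDerivAt_scaledConvergent_succ (-s) t (N + n)).const_mul β)).congr_deriv ?_
    rw [neg_sq]
    ring
  have hcont : Continuous fun t => α * scaledConvergent s t N + β * scaledConvergent (-s) t N :=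
    ((continuous_scaledConvergent s N).const_mul α).add
      ((continuous_scaledConvergent (-s) N).const_mul β)
  have := eventually_pos_of_ladder (b := u)
    (g := fun n t => α * scaledConvergent s t (N + n) + β * scaledConvergent (-s) t (N + n))
    hpos (fun n t _ => hderiv n t) (fun t _ => hcosh t) (by simp)
    (fun t ht => Real.sinh_nonneg_iff.2 ht.1)
    (fun n => combination_scaledConvergent_apply_zero_pos _ h) hcont.continuousOn hu.le
    (sub_pos.2 (Real.one_lt_cosh.2 hu.ne'))
  rw [← map_add_atTop_eq_nat N, eventually_map]
  simpa only [add_comm] using this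

lemma eventually_pos_combination_scaledConvergent (s u : ℝ) (h : 0 < α + β) :
    ∀ᶠ n in atTop, 0 < α * scaledConvergent s u n + β * scaledConvergent (-s) u n := by
  rcases lt_trichotomy u 0 with hu | rfl | hu
  · have := eventually_pos_combination_scaledConvergent_of_pos (s := -s) (neg_pos.2 hu) h
    simpa only [scaledConvergent_neg_right, neg_neg] using this
  · exact .of_forall fun n => combination_scaledConvergent_apply_zero_pos n h
  · exact eventually_pos_combination_scaledConvergent_of_pos hu h

lemma tendsto_scaledConvergent_div (s u : ℝ) :
    Tendsto (fun n => scaledConvergent s u n / scaledConvergent (-s) u n) atTop (𝓝 1) :=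
  tendsto_div_nhds_one_of_eventually_pos_combination fun _ _ =>
    eventually_pos_combination_scaledConvergent s u

lemma scaledConvergent_eq {r : ℕ → ℝ} (h₀ : r 0 = 1) (h₁ : r 1 = -1 + s * Real.tanh u)
    (hr : ∀ n : ℕ, r (n + 2) =
      -(2 * n + 3) * r (n + 1) + (s ^ 2 - (n + 1) ^ 2) * Real.tanh u ^ 2 * r n) :
    scaledConvergent s u n = Real.exp (s * u) * (-Real.cosh u) ^ n * r n := by
  have hsinh : Real.sinh u = Real.tanh u * Real.cosh u := by
    rw [Real.tanh_eq_sinh_div_cosh, div_mul_cancel₀ _ (Real.cosh_pos u).ne']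
  induction n using Nat.twoStepInduction with
  | zero => simp [scaledConvergent_zero, h₀]
  | one =>
    rw [scaledConvergent_one, h₁, hsinh]
    ring
  | more n ih₀ ih₁ =>
    rw [scaledConvergent_add_two, ih₀, ih₁, hr, hsinh]
    ring

lemma tendsto_div_of_recurrence {x y : ℕ → ℝ}
    (hx₀ : x 0 = 1) (hx₁ : x 1 = -1 + s * Real.tanh u)
    (hx : ∀ n : ℕ, x (n + 2) =
      -(2 * n + 3) * x (n + 1) + (s ^ 2 - (n + 1) ^ 2) * Real.tanh u ^ 2 * x n)
    (hy₀ : y 0 = 1) (hy₁ : y 1 = -1 - s * Real.tanh u)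
    (hy : ∀ n : ℕ, y (n + 2) =
      -(2 * n + 3) * y (n + 1) + (s ^ 2 - (n + 1) ^ 2) * Real.tanh u ^ 2 * y n) :
    Tendsto (fun n => x n / y n) atTop (𝓝 (Real.exp (-(2 * s * u)))) := by
  have hlim := (tendsto_scaledConvergent_div s u).mul_const (Real.exp (-(2 * s * u)))
  rw [one_mul] at hlim
  refine hlim.congr fun n => ?_
  have hexp : Real.exp (-s * u) = Real.exp (s * u) * Real.exp (-(2 * s * u)) := by
    rw [← Real.exp_add]
    ring_nf
  have hcosh : (-Real.cosh u) ^ n ≠ 0 := pow_ne_zero _ (neg_ne_zero.2 (Real.cosh_pos u).ne')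
  rw [scaledConvergent_eq n hx₀ hx₁ hx,
    scaledConvergent_eq n hy₀ (by rw [hy₁]; ring) (by simpa only [neg_sq] using hy), hexp]
  field_simp

end ScaledConvergent

lemma tanh_neg_half_log {x : ℝ} (hx : 0 < x) :
    Real.tanh (-(Real.log x / 2)) = (1 - x) / (1 + x) := by
  obtain ⟨y, rfl⟩ : ∃ y, Real.exp y = x := ⟨Real.log x, Real.exp_log hx⟩
  have hsq : Real.exp y = Real.exp (y / 2) * Real.exp (y / 2) := by
    rw [← Real.exp_add, add_halves]
  rw [Real.log_exp, Real.tanh_eq, neg_neg, Real.exp_neg, hsq]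
  field_simp

theorem cf_rpow_general (lam q : ℝ) (hlam : 0 < lam)
    (phi : ℝ) (hphi : phi = (1 - lam) / (1 + lam))
    (a b p pq : ℕ → ℝ)
    (ha0 : a 0 = 1)
    (hb1 : b 1 = 2 * q * phi) (ha1 : a 1 = -1 - q * phi)
    (hb : ∀ k : ℕ, 2 ≤ k → b k = (q ^ 2 - ((k : ℝ) - 1) ^ 2) * phi ^ 2)
    (ha : ∀ k : ℕ, 2 ≤ k → a k = -(2 * (k : ℝ) - 1))
    (hp0 : p 0 = 1) (hp1 : p 1 = a 0)
    (hq0' : pq 0 = 0) (hq1' : pq 1 = 1)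
    (hp : ∀ k, 1 ≤ k → p (k + 1) = a k * p k + b k * p (k - 1))
    (hpq : ∀ k, 1 ≤ k → pq (k + 1) = a k * pq k + b k * pq (k - 1)) :
    Tendsto (fun n => p (n + 1) / pq (n + 1)) atTop (nhds (lam ^ q)) := by
  have hlim : lam ^ q = Real.exp (-(2 * q * -(Real.log lam / 2))) := by
    rw [Real.rpow_def_of_pos hlam]
    ring_nf
  rw [← tanh_neg_half_log hlam] at hphi
  have hrec {r : ℕ → ℝ} (hr : ∀ k, 1 ≤ k → r (k + 1) = a k * r k + b k * r (k - 1)) (n : ℕ) :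
      r (n + 3) = -(2 * n + 3) * r (n + 2) + (q ^ 2 - (n + 1) ^ 2) * phi ^ 2 * r (n + 1) := by
    rw [hr (n + 2) (by lia), ha _ (by lia), hb _ (by lia), Nat.add_sub_assoc (by lia)]
    push_cast
    ring
  have hp2 : p 2 = -1 + q * phi := by
    rw [hp 1 le_rfl, hp1, ha0, ha1, hb1, hp0]
    ring
  have hpq2 : pq 2 = -1 - q * phi := by
    rw [hpq 1 le_rfl, hq1', ha1, hq0']
    ring
  subst hphi
  rw [hlim]
  exact tendsto_div_of_recurrence (x := fun n => p (n + 1)) (y := fun n => pq (n + 1))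
    (hp1.trans ha0) hp2 (hrec hp) hq1' hpq2 (hrec hpq)

/-- Continued fraction expansion of `λ^q` (Lemma 3.3 (i)): with `φ = (1-λ)/(1+λ)`,
the convergents of `[1; 2qφ/(-1-qφ), ((q²-(k-1)²)φ²)/(-(2k-1)) for k ≥ 2]`
converge to `λ^q`.  Indices are shifted by one: `p 0 = p_{-1} = 1`, `p 1 = p₀ = a₀`, etc. -/
theorem cf_rpow (lam q : ℝ) (hlam : 0 < lam) (hq0 : 0 < q) (hq1 : q < 1)
    (phi : ℝ) (hphi : phi = (1 - lam) / (1 + lam))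
    (a b p pq : ℕ → ℝ)
    (ha0 : a 0 = 1)
    (hb1 : b 1 = 2 * q * phi) (ha1 : a 1 = -1 - q * phi)
    (hb : ∀ k : ℕ, 2 ≤ k → b k = (q ^ 2 - ((k : ℝ) - 1) ^ 2) * phi ^ 2)
    (ha : ∀ k : ℕ, 2 ≤ k → a k = -(2 * (k : ℝ) - 1))
    (hp0 : p 0 = 1) (hp1 : p 1 = a 0)
    (hq0' : pq 0 = 0) (hq1' : pq 1 = 1)
    (hp : ∀ k, 1 ≤ k → p (k + 1) = a k * p k + b k * p (k - 1))
    (hpq : ∀ k, 1 ≤ k → pq (k + 1) = a k * pq k + b k * pq (k - 1)) :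
    Tendsto (fun n => p (n + 1) / pq (n + 1)) atTop (nhds (lam ^ q)) :=
  cf_rpow_general lam q hlam phi hphi a b p pq ha0 hb1 ha1 hb ha hp0 hp1 hq0' hq1' hp hpq
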